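/- Let n ≥ 1 and let f : {0,1}^n → {0,1} be a conservative local rule of width n. Then there exist an integer m ≥ 1, an integer a, and a function g : ℤ^m → ℤ such that for every strictly increasing s : ℤ → ℤ, the function t : ℤ → ℤ defined by t_i = g(s_{i−a}, s_{i+1−a}, …, s_{i+m−1−a}) is strictly increasing, and φ(t) = f_∞(φ(s)). -/

import Mathlib

/-- A local rule `f` of width `n` is `L`-conservative if for every `L`-periodic
bisequence `x : ℤ → Fin 2`, the sum of `f` applied to the `n`-blocks starting at
positions `1,…,L` equals the sum of `x` over positions `1,…,L`. -/
def LCons (n : ℕ) (f : (Fin n → Fin 2) → Fin 2) (L : ℕ) : Prop :=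
  ∀ x : ℤ → Fin 2, (∀ i : ℤ, x (i + L) = x i) →
    (∑ i ∈ Finset.range L, (f (fun k => x ((i : ℤ) + 1 + (k : ℕ)))).val) =
      ∑ i ∈ Finset.range L, (x ((i : ℤ) + 1)).val

/-- For a (strictly increasing) `s : ℤ → ℤ`, `phi s` is the occupancy bisequence:
`phi s i = 1` iff `i` lies in the range of `s`. -/
noncomputable def phi (s : ℤ → ℤ) (i : ℤ) : Fin 2 :=
  haveI := Classical.propDecidable (i ∈ Set.range s)
  if i ∈ Set.range s then 1 else 0

/-!
Erase all particles to the left of a boundary `i`. By conservation, the number of output particles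
that then appear to the left of `i` is the number of particles that crossed the boundary leftwards.
This `flux` depends on fewer than `n` sites starting at `i`, and conservation turns into the
local continuity equation `flux (i + 1) + x i = flux i + f_∞(x) i`.

A strictly increasing `s` is encoded by its lower adjoint `h`, where `h i` is the index of the first
particle at or to the right of `i`; the discrete derivative of `h` is `φ(s)`. By the continuity
equation `h + flux` has discrete derivative `f_∞(φ(s))`, so its upper adjoint `t` is strictly
increasing with `φ(t) = f_∞(φ(s))`. As `0 ≤ flux ≤ n`, the inequality `h i + flux i ≤ k` that
determines `t k` is decided by the particles with index in `[k - n, k + n)`.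
-/

open Finset Function

section FluxOfConservativeRule

variable {n L M : ℕ} {f : (Fin n → Fin 2) → Fin 2} {x y : ℤ → Fin 2} {i : ℤ}

/-- The global map `f_∞` of a local rule `f`. -/
def globalMap (f : (Fin n → Fin 2) → Fin 2) (x : ℤ → Fin 2) (i : ℤ) : Fin 2 :=
  f fun k => x (i + (k : ℕ))

theorem globalMap_congr (h : Set.EqOn x y (Set.Ico i (i + n))) :
    globalMap f x i = globalMap f y i :=
  congrArg f <| funext fun k => h ⟨by omega, by omega⟩

theorem LCons.apply_zero (hf : LCons n f L) (hL : 0 < L) : f 0 = 0 := by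
  have h := hf 0 fun _ => rfl
  simp only [Pi.zero_apply, sum_const, card_range, smul_eq_mul, Fin.val_zero, mul_zero,
    mul_eq_zero, hL.ne', false_or] at h
  exact Fin.ext h

theorem LCons.globalMap_eq_zero (hf : LCons n f L) (hL : 0 < L)
    (hx : Set.EqOn x 0 (Set.Ico i (i + n))) : globalMap f x i = 0 :=
  (globalMap_congr hx).trans (hf.apply_zero hL)

theorem apply_add_emod_of_support_subset {a q : ℤ} (hx : support x ⊆ Set.Ico (a + n) (a + L))
    (hq : 0 ≤ q) (hqL : q < L + n) : x (a + q % L) = x (a + q) := by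
  rcases lt_or_ge q L with hlt | hge
  · rw [Int.emod_eq_of_lt hq hlt]
  · obtain ⟨r, hr⟩ := Int.eq_ofNat_of_zero_le (sub_nonneg.2 hge)
    have hmod : q % L ≤ r := by
      rw [← Int.sub_emod_right, hr]
      exact_mod_cast Nat.mod_le r L
    rw [notMem_support.1 fun h => (hx h).1.not_gt (by omega),
      notMem_support.1 fun h => (hx h).2.not_ge (by omega)]

/-- The `n` leading zeros separate consecutive copies of the word in the `L`-periodic extension of
`x`, so no window sees two of them. -/
theorem LCons.sum_globalMap {a : ℤ} (hf : LCons n f L)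
    (hx : support x ⊆ Set.Ico (a + n) (a + L)) :
    ∑ j ∈ range L, (globalMap f x (a + j)).val = ∑ j ∈ range L, (x (a + j)).val := by
  have hper := hf (fun p => x (a + (p - 1) % L)) fun p => by
    rw [add_sub_right_comm, Int.add_emod_right]
  convert hper using 3 with j hj j hj
  · refine congrArg f (funext fun k => ?_)
    rw [mem_range] at hj
    rw [apply_add_emod_of_support_subset hx (by omega) (by omega)]
    ring_nf
  · rw [mem_range] at hj
    rw [apply_add_emod_of_support_subset hx (by omega) (by omega)]
    ring_nf

/-- For a conservative rule, the number of particles that cross the left boundary of `i` leftwards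
in one step, measured as the number of output particles to the left of `i` once all particles there
are erased. Only the `n` sites before `i` are counted, as the windows further left are empty. -/
noncomputable def flux (f : (Fin n → Fin 2) → Fin 2) (x : ℤ → Fin 2) (i : ℤ) : ℕ :=
  ∑ j ∈ range n, (globalMap f (Set.indicator (Set.Ici i) x) (i - n + j)).val

theorem flux_le : flux f x i ≤ n := by
  simpa [flux] using sum_le_card_nsmul (range n)
    (fun j : ℕ => (globalMap f (Set.indicator (Set.Ici i) x) (i - n + j)).val) 1
    fun _ _ => Fin.is_le _

theorem flux_congr (h : Set.EqOn x y (Set.Ico i (i + n - 1))) : flux f x i = flux f y i := by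
  refine sum_congr rfl fun j hj => congrArg Fin.val (globalMap_congr fun p hp => ?_)
  rw [mem_range] at hj
  rw [Set.mem_Ico] at hp
  simp only [Set.indicator_apply, Set.mem_Ici]
  split_ifs with hip
  · exact h ⟨hip, by omega⟩
  · rfl

theorem flux_add_sum_globalMap (hf : LCons n f (n + M)) (hx : ∀ p, i + M ≤ p → x p = 0) :
    flux f x i + ∑ j ∈ range M, (globalMap f x (i + j)).val = ∑ j ∈ range M, (x (i + j)).val := by
  have hsupp : support (Set.indicator (Set.Ici i) x) ⊆
      Set.Ico (i - n + n) (i - n + (n + M : ℕ)) := by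
    rw [Set.support_indicator]
    rintro p ⟨hip, hp⟩
    exact ⟨by simpa using hip, not_le.1 fun hMp => hp (hx p (by omega))⟩
  have hsum := hf.sum_globalMap hsupp
  have herased : ∑ j ∈ range n, (Set.indicator (Set.Ici i) x (i - n + j)).val = 0 :=
    sum_eq_zero fun j hj => by
      rw [mem_range] at hj
      rw [Set.indicator_of_notMem (by rw [Set.mem_Ici]; omega), Fin.val_zero]
  have hkept : ∀ j : ℕ, globalMap f (Set.indicator (Set.Ici i) x) (i + j) = globalMap f x (i + j) :=
    fun j => globalMap_congr fun p hp =>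
      Set.indicator_of_mem (Set.mem_Ici.2 (by have := hp.1; omega)) x
  have hkept' : ∀ j : ℕ, Set.indicator (Set.Ici i) x (i + j) = x (i + j) :=
    fun j => Set.indicator_of_mem (Set.mem_Ici.2 (by omega)) x
  simp only [sum_range_add, herased, zero_add, Nat.cast_add, ← add_assoc, sub_add_cancel, hkept,
    hkept'] at hsum
  exact hsum

theorem flux_add_one_of_eq_zero (hf : LCons n f (n + M)) (hM : 0 < M)
    (hx : ∀ p, i + M ≤ p → x p = 0) :
    flux f x (i + 1) + (x i).val = flux f x i + (globalMap f x i).val := by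
  have hi := flux_add_sum_globalMap hf hx
  have hi1 := flux_add_sum_globalMap (i := i + 1) hf fun p hp => hx p (by omega)
  have hshift (z : ℤ → Fin 2) (hz : z (i + M) = 0) :
      ∑ j ∈ range M, (z (i + 1 + j)).val + (z i).val = ∑ j ∈ range M, (z (i + j)).val := by
    have h := (sum_range_succ' (fun j : ℕ => (z (i + j)).val) M).symm.trans (sum_range_succ _ M)
    simpa [hz, add_assoc, add_comm, add_left_comm] using h
  have hglobal := hshift (globalMap f x)
    (hf.globalMap_eq_zero (by omega) fun p hp => hx p hp.1)
  have hself := hshift x (hx _ le_rfl)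
  omega

theorem LCons.flux_add_one (hf : LCons n f L) (hn : 1 ≤ n) (hL : 2 * n ≤ L)
    (x : ℤ → Fin 2) (i : ℤ) :
    flux f x (i + 1) + (x i).val = flux f x i + (globalMap f x i).val := by
  obtain ⟨M, rfl⟩ := Nat.exists_eq_add_of_le (show n ≤ L by omega)
  let z := Set.indicator (Set.Iio (i + M)) x
  have hxz (b : ℤ) (hb : b ≤ i + M) : Set.EqOn x z (Set.Iio b) := fun p hp =>
    (Set.indicator_of_mem (Set.mem_Iio.2 (hp.trans_le hb)) x).symm
  have hz : flux f z (i + 1) + (z i).val = flux f z i + (globalMap f z i).val :=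
    flux_add_one_of_eq_zero hf (by omega) fun p hp =>
      Set.indicator_of_notMem (Set.notMem_Iio.2 hp) x
  rwa [flux_congr ((hxz _ (by omega)).mono Set.Ico_subset_Iio_self),
    flux_congr ((hxz _ (by omega)).mono Set.Ico_subset_Iio_self),
    globalMap_congr ((hxz _ (by omega)).mono Set.Ico_subset_Iio_self),
    hxz (i + 1) (by omega) (lt_add_one i)]

end FluxOfConservativeRule

section ParticleIndex

variable {s : ℤ → ℤ}

theorem phi_eq_one_iff {i : ℤ} : phi s i = 1 ↔ i ∈ Set.range s := by
  simp [phi]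

theorem phi_eq_zero_iff {i : ℤ} : phi s i = 0 ↔ i ∉ Set.range s := by
  simp [phi]

theorem phi_comp_add_right (s : ℤ → ℤ) (c : ℤ) : phi (fun j => s (j + c)) = phi s := by
  have hrange : Set.range (fun j => s (j + c)) = Set.range s :=
    (Equiv.addRight c).surjective.range_comp s
  unfold phi
  rw [hrange]

theorem sub_le_sub_of_strictMono (hs : StrictMono s) {k l : ℤ} (hkl : k ≤ l) :
    l - k ≤ s l - s k := by
  have hmono : Monotone fun j => s j - j :=
    monotone_int_of_le_succ fun j => by linarith [Int.add_one_le_iff.2 (hs (lt_add_one j))]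
  linarith [hmono hkl]

/-- The index of the first particle of `s` at or to the right of `i`. -/
noncomputable def particleIndex (s : ℤ → ℤ) (i : ℤ) : ℤ :=
  sInf {h | i ≤ s h}

theorem gc_particleIndex (hs : StrictMono s) : GaloisConnection (particleIndex s) s := by
  intro i h
  have hne : {h | i ≤ s h}.Nonempty := by
    have := sub_le_sub_of_strictMono hs (le_max_left 0 (i - s 0))
    exact ⟨max 0 (i - s 0), show i ≤ s _ by omega⟩
  have hbdd : BddBelow {h | i ≤ s h} := by
    refine ⟨min 0 (i - s 0), fun h (hh : i ≤ s h) => ?_⟩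
    by_contra! hlt
    have := sub_le_sub_of_strictMono hs (show h ≤ 0 by omega)
    omega
  exact ⟨fun hle => (Int.csInf_mem hne hbdd).trans (hs.monotone hle), fun hle => csInf_le hbdd hle⟩

theorem particleIndex_apply (hs : StrictMono s) (k : ℤ) : particleIndex s (s k) = k :=
  hs.injective ((gc_particleIndex hs).u_l_u_eq_u k)

theorem particleIndex_add_one (hs : StrictMono s) (i : ℤ) :
    particleIndex s (i + 1) = particleIndex s i + (phi s i).val := by
  have hgc := gc_particleIndex hs
  by_cases hi : i ∈ Set.range s
  · obtain ⟨k, rfl⟩ := hi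
    have hle : particleIndex s (s k + 1) ≤ k + 1 := (hgc _ _).2 (hs (lt_add_one k))
    have hlt : k < particleIndex s (s k + 1) := hgc.lt_iff_lt.2 (lt_add_one _)
    rw [particleIndex_apply hs, phi_eq_one_iff.2 ⟨k, rfl⟩, Fin.val_one]
    omega
  · rw [phi_eq_zero_iff.2 hi, Fin.val_zero, Nat.cast_zero, add_zero]
    refine eq_of_forall_ge_iff fun h => ?_
    have hne : i ≠ s h := fun hih => hi ⟨h, hih.symm⟩
    rw [hgc, hgc, Int.add_one_le_iff, lt_iff_le_and_ne, and_iff_left hne]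

theorem particleIndex_comp_add_right (hs : StrictMono s) (c i : ℤ) :
    particleIndex (fun j => s (j + c)) i = particleIndex s i - c := by
  have hshift : StrictMono fun j => s (j + c) := hs.comp (add_left_strictMono (a := c))
  exact eq_of_forall_ge_iff fun h => by
    rw [gc_particleIndex hshift, ← gc_particleIndex hs, sub_le_iff_le_add]

theorem mem_Ico_particleIndex {n : ℕ} {i k : ℤ} (hs : StrictMono s)
    (hk : s k ∈ Set.Ico i (i + n)) :
    k ∈ Set.Ico (particleIndex s i) (particleIndex s i + n) := by
  have hle : particleIndex s i ≤ k := (gc_particleIndex hs _ _).2 hk.1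
  have hfirst : i ≤ s (particleIndex s i) := (gc_particleIndex hs).le_u_l i
  have hsub := sub_le_sub_of_strictMono hs hle
  exact ⟨hle, by linarith [hk.2]⟩

theorem phi_eqOn_of_eqOn {s' : ℤ → ℤ} {n : ℕ} {i : ℤ} (hs : StrictMono s) (hs' : StrictMono s')
    (hindex : particleIndex s i = particleIndex s' i)
    (heq : Set.EqOn s s' (Set.Ico (particleIndex s i) (particleIndex s i + n))) :
    Set.EqOn (phi s) (phi s') (Set.Ico i (i + n)) := by
  intro p hp
  have hrange : p ∈ Set.range s ↔ p ∈ Set.range s' := by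
    constructor <;> rintro ⟨k, rfl⟩
    · exact ⟨k, (heq (mem_Ico_particleIndex hs hp)).symm⟩
    · exact ⟨k, heq (hindex ▸ mem_Ico_particleIndex hs' hp)⟩
  by_cases hps : p ∈ Set.range s
  · rw [phi_eq_one_iff.2 hps, phi_eq_one_iff.2 (hrange.1 hps)]
  · rw [phi_eq_zero_iff.2 hps, phi_eq_zero_iff.2 (mt hrange.2 hps)]

theorem strictMono_and_phi_eq_of_gc {G t : ℤ → ℤ} {y : ℤ → Fin 2} (hgc : GaloisConnection G t)
    (hG : ∀ i, G (i + 1) = G i + (y i).val) : StrictMono t ∧ phi t = y := by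
  have hGt (k : ℤ) : G (t k) = k := by
    have hle : G (t k) ≤ k := hgc.l_u_le k
    have hlt : k < G (t k + 1) := hgc.lt_iff_lt.2 (lt_add_one _)
    have := hG (t k)
    omega
  refine ⟨hgc.monotone_u.strictMono_of_injective (LeftInverse.injective hGt), funext fun i => ?_⟩
  have hle : i ≤ t (G i) := hgc.le_u_l i
  by_cases hi : i ∈ Set.range t
  · obtain ⟨k, rfl⟩ := hi
    have hlt : k < G (t k + 1) := hgc.lt_iff_lt.2 (lt_add_one _)
    rw [phi_eq_one_iff.2 ⟨k, rfl⟩]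
    have := hG (t k)
    have := hGt k
    omega
  · have hlt : i < t (G i) := hle.lt_of_ne fun h => hi ⟨_, h.symm⟩
    have : G (i + 1) ≤ G i := (hgc _ _).2 hlt
    rw [phi_eq_zero_iff.2 hi]
    have := hG i
    omega

end ParticleIndex

section OutputParticle

variable {n L : ℕ} {f : (Fin n → Fin 2) → Fin 2} {s s' : ℤ → ℤ} {i : ℤ}

/-- The index of the first particle at or to the right of `i` after one step of `f`, when output
particles are numbered so that `flux` accounts for the particles that crossed the boundary. -/
noncomputable def outputIndex (f : (Fin n → Fin 2) → Fin 2) (s : ℤ → ℤ) (i : ℤ) : ℤ :=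
  particleIndex s i + flux f (phi s) i

/-- The position of the `k`-th particle after one step of `f`. -/
noncomputable def outputParticle (f : (Fin n → Fin 2) → Fin 2) (s : ℤ → ℤ) (k : ℤ) : ℤ :=
  sSup {i | outputIndex f s i ≤ k}

theorem outputIndex_add_one (hn : 1 ≤ n) (hL : 2 * n ≤ L) (hf : LCons n f L) (hs : StrictMono s)
    (i : ℤ) : outputIndex f s (i + 1) = outputIndex f s i + (globalMap f (phi s) i).val := by
  have hflux := hf.flux_add_one hn hL (phi s) i
  have hindex := particleIndex_add_one hs i
  unfold outputIndex
  omega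

theorem gc_outputParticle (hn : 1 ≤ n) (hL : 2 * n ≤ L) (hf : LCons n f L) (hs : StrictMono s) :
    GaloisConnection (outputIndex f s) (outputParticle f s) := by
  have hmono : Monotone (outputIndex f s) := monotone_int_of_le_succ fun i => by
    rw [outputIndex_add_one hn hL hf hs]
    omega
  intro i k
  have hne : {i | outputIndex f s i ≤ k}.Nonempty := by
    refine ⟨s (k - n), show particleIndex s _ + (flux f (phi s) _ : ℤ) ≤ k from ?_⟩
    have hflux : flux f (phi s) (s (k - n)) ≤ n := flux_le
    rw [particleIndex_apply hs]
    omega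
  have hbdd : BddAbove {i | outputIndex f s i ≤ k} := by
    refine ⟨s k, fun i (hi : particleIndex s i + (flux f (phi s) i : ℤ) ≤ k) => ?_⟩
    exact (gc_particleIndex hs).le_u (by omega)
  exact ⟨fun hle => le_csSup hbdd hle, fun hle => (hmono hle).trans (Int.csSup_mem hne hbdd)⟩

theorem outputParticle_comp_add_right (hs : StrictMono s) (c k : ℤ) :
    outputParticle f (fun j => s (j + c)) k = outputParticle f s (k + c) := by
  have hindex (i : ℤ) : outputIndex f (fun j => s (j + c)) i = outputIndex f s i - c := by
    unfold outputIndex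
    rw [particleIndex_comp_add_right hs, phi_comp_add_right, sub_add_eq_add_sub]
  simp only [outputParticle, hindex, sub_le_iff_le_add]

theorem outputIndex_nonpos_of_eqOn (hn : 1 ≤ n) (hs : StrictMono s) (hs' : StrictMono s')
    (heq : Set.EqOn s s' (Set.Ico (-n) n)) (hi : outputIndex f s i ≤ 0) :
    outputIndex f s' i ≤ 0 := by
  have hiff (h : ℤ) (hh : h ∈ Set.Ico (-n : ℤ) n) :
      particleIndex s i ≤ h ↔ particleIndex s' i ≤ h := by
    rw [gc_particleIndex hs, gc_particleIndex hs', heq hh]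
  have hflux : flux f (phi s') i ≤ n := flux_le
  unfold outputIndex at *
  by_cases hfar : particleIndex s' i ≤ -n
  · omega
  have hnear := mt (hiff (-n) ⟨le_rfl, by omega⟩).1 hfar
  have hindex : particleIndex s i = particleIndex s' i := by
    have hle := (hiff (particleIndex s i) ⟨by omega, by omega⟩).1 le_rfl
    exact ((hiff (particleIndex s' i) ⟨by omega, by omega⟩).2 le_rfl).antisymm hle
  have hphi := phi_eqOn_of_eqOn (n := n) hs hs' hindex
    (heq.mono (Set.Ico_subset_Ico (by omega) (by omega)))
  rwa [← hindex, ← flux_congr (hphi.mono (Set.Ico_subset_Ico_right (by omega)))]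

theorem outputParticle_zero_congr (hn : 1 ≤ n) (hs : StrictMono s) (hs' : StrictMono s')
    (heq : Set.EqOn s s' (Set.Ico (-n) n)) : outputParticle f s 0 = outputParticle f s' 0 :=
  congrArg sSup <| Set.ext fun _ =>
    ⟨outputIndex_nonpos_of_eqOn hn hs hs' heq, outputIndex_nonpos_of_eqOn hn hs' hs heq.symm⟩

theorem exists_outputParticle_eq_window (hn : 1 ≤ n) (f : (Fin n → Fin 2) → Fin 2) :
    ∃ g : (Fin (2 * n) → ℤ) → ℤ, ∀ s, StrictMono s → ∀ k,
      outputParticle f s k = g fun j => s (k - n + (j : ℕ)) := by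
  have hfactors : FactorsThrough (fun s : {s : ℤ → ℤ // StrictMono s} => outputParticle f s 0)
      (fun s (j : Fin (2 * n)) => s.1 (-n + (j : ℕ))) := by
    rintro ⟨s, hs⟩ ⟨s', hs'⟩ hwindow
    refine outputParticle_zero_congr hn hs hs' fun j hj => ?_
    rw [Set.mem_Ico] at hj
    have hj' := congrFun hwindow ⟨(j + n).toNat, by omega⟩
    simpa [Int.toNat_of_nonneg (show 0 ≤ j + n by omega)] using hj'
  obtain ⟨g, hg⟩ := (factorsThrough_iff _).1 hfactors
  refine ⟨g, fun s hs k => ?_⟩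
  have hshift : StrictMono fun j => s (j + k) := hs.comp (add_left_strictMono (a := k))
  calc outputParticle f s k = outputParticle f (fun j => s (j + k)) 0 := by
        rw [outputParticle_comp_add_right hs, zero_add]
    _ = g fun j => s (-n + (j : ℕ) + k) := congrFun hg ⟨_, hshift⟩
    _ = g fun j => s (k - n + (j : ℕ)) := by simp only [sub_eq_neg_add, add_right_comm]

end OutputParticle

theorem stmt_9_general {n L : ℕ} {f : (Fin n → Fin 2) → Fin 2} (hn : 1 ≤ n) (hL : 2 * n ≤ L)
    (hf : LCons n f L) :
    ∃ g : (Fin (2 * n) → ℤ) → ℤ, ∀ s : ℤ → ℤ, StrictMono s →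
      StrictMono (fun i : ℤ => g fun k => s (i - n + (k : ℕ))) ∧
        phi (fun i : ℤ => g fun k => s (i - n + (k : ℕ))) = globalMap f (phi s) := by
  obtain ⟨g, hg⟩ := exists_outputParticle_eq_window hn f
  refine ⟨g, fun s hs => ?_⟩
  rw [← funext (hg s hs)]
  exact strictMono_and_phi_eq_of_gc (gc_outputParticle hn hL hf hs)
    (outputIndex_add_one hn hL hf hs)

/-- For every conservative local rule `f` of width `n ≥ 1` there exist `m ≥ 1`,
`a ∈ ℤ` and a local mapping `g : ℤ^m → ℤ` of particle coordinates such that for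
any strictly increasing `s : ℤ → ℤ`, the bisequence
`t i = g (s (i-a), …, s (i+m-1-a))` is strictly increasing and `φ(t) = f_∞(φ(s))`. -/
theorem stmt_9 (n : ℕ) (hn : 1 ≤ n) (f : (Fin n → Fin 2) → Fin 2)
    (hf : ∀ L : ℕ, 0 < L → LCons n f L) :
    ∃ m : ℕ, 1 ≤ m ∧ ∃ a : ℤ, ∃ g : (Fin m → ℤ) → ℤ,
      ∀ s : ℤ → ℤ, StrictMono s →
        StrictMono (fun i : ℤ => g (fun k => s (i - a + (k : ℕ)))) ∧
        ∀ i : ℤ,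
          phi (fun i : ℤ => g (fun k => s (i - a + (k : ℕ)))) i =
            f (fun k => phi s (i + (k : ℕ))) := by
  obtain ⟨g, hg⟩ := stmt_9_general hn le_rfl (hf (2 * n) (by omega))
  exact ⟨2 * n, by omega, n, g, fun s hs => ⟨(hg s hs).1, congrFun (hg s hs).2⟩⟩
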